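/- With Γ^L and C^L as defined in the context, there exist a constant c > 0 and an integer k₀ such that for every L = 2^k with k ≥ k₀, every admissible index (t, r, a, b) with r < t, every q ∈ (0,1], and all grid points p, p' ∈ {0, 1/L, 2/L, …, 1} (with p, p' > 0 for C): |Γ^L_{t,r,a,b}(p, q) − Γ^L_{t,r,a,b}(p', q)| ≤ c·|p − p'| and |C^L_{t,r,a}(p) − C^L_{t,r,a}(p')| ≤ c·|p − p'|; i.e., Γ^L and C^L are c-Lipschitz in the layer variable p along the grid, uniformly in L. -/

import Mathlib

open MeasureTheory Set Finset Filter Topology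

/-- The defining recursion (from the Tensor-Program analysis of a depth-`L` linear residual
network `x^l = x^{l−1} + L^{−1/2} W^l x^{l−1}` trained for `T` SGD steps under Depth-μP)
for the coefficient functions `Γ^L_{t,r,a,b}(p,q)` and covariance functions `C^L_{t,s,a}(p)`,
together with the output values `f̊_t` and loss derivatives `χ̊_t = ℓ'_t(f̊_t)`.

Conventions: Booleans encode the indices `a, b ∈ {0,1}` (`false = 0`, `true = 1`); the
time index `r, s = −1` refers to the input/output layers `U, V`; `C_{−1,−1,·} ≡ 1`;
`C_{t,s,·} ≡ 0` if exactly one of `t, s` is `−1`; `C` is symmetric; `Γ_{s,r,·,·} ≡ 0` for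
`r > s`; `Γ^L` is constant in `p` on each interval `((l−1)/L, l/L]`. -/
structure IsLinearTP (T L : ℕ) (ξ : ℕ → ℝ) (ℓ' : ℕ → ℝ → ℝ)
    (Γ : ℕ → ℤ → Bool → Bool → ℝ → ℝ → ℝ)
    (C : ℤ → ℤ → Bool → ℝ → ℝ)
    (f χ : ℕ → ℝ) : Prop where
  C_symm : ∀ (t s : ℤ) (b : Bool) (p : ℝ), C t s b p = C s t b p
  C_base : ∀ (b : Bool) (p : ℝ), C (-1) (-1) b p = 1
  C_mixed : ∀ t : ℤ, 0 ≤ t → ∀ (b : Bool) (p : ℝ), C t (-1) b p = 0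
  Γ_vanish : ∀ (t : ℕ) (r : ℤ), (t : ℤ) < r → ∀ (a b : Bool) (p q : ℝ), Γ t r a b p q = 0
  Γ_const : ∀ t : ℕ, t < T → ∀ r : ℤ, -1 ≤ r → r ≤ (t : ℤ) → ∀ a b : Bool,
    ∀ l : ℕ, 1 ≤ l → l ≤ L → ∀ p q : ℝ, ((l : ℝ) - 1) / L < p → p ≤ (l : ℝ) / L →
      0 < q → q ≤ 1 → Γ t r a b p q = Γ t r a b ((l : ℝ) / L) q
  fwd_init : ∀ t : ℕ, t < T → ∀ r : ℤ, -1 ≤ r → r ≤ (t : ℤ) → ∀ b : Bool,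
    ∀ q : ℝ, 0 < q → q ≤ 1 →
      Γ t r false b 0 q = if r = -1 ∧ b = false then ξ t else 0
  fwd_step : ∀ t : ℕ, t < T → ∀ l : ℕ, 1 ≤ l → l ≤ L → ∀ r : ℤ, -1 ≤ r → r ≤ (t : ℤ) →
    ∀ b : Bool, ∀ p q : ℝ, ((l : ℝ) - 1) / L < p → p ≤ (l : ℝ) / L → 0 < q → q ≤ 1 →
      Γ t r false b p q =
        Γ t r false b (((l : ℝ) - 1) / L) q
          + (if (t : ℤ) = r ∧ b = false ∧ (l : ℤ) = ⌈(L : ℝ) * q⌉ then 1 else 0)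
          + (1 / (L : ℝ)) * ∑ s ∈ Finset.range t,
              Γ s r true b ((l : ℝ) / L) q *
                (Γ t (s : ℤ) false true (((l : ℝ) - 1) / L) ((l : ℝ) / L)
                  - C (t : ℤ) (s : ℤ) false ((l : ℝ) / L))
  fwd_C : ∀ t : ℕ, t < T → ∀ s : ℕ, s ≤ t → ∀ l : ℕ, 1 ≤ l → l ≤ L →
    ∀ p : ℝ, ((l : ℝ) - 1) / L < p → p ≤ (l : ℝ) / L →
      C (t : ℤ) (s : ℤ) false p =
        ∑ t' ∈ Finset.Icc (-1 : ℤ) (t : ℤ), ∑ s' ∈ Finset.Icc (-1 : ℤ) (s : ℤ), ∑ b : Bool,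
          ∫ q in Ioc (0 : ℝ) 1,
            Γ t t' false b (((l : ℝ) - 1) / L) q * C t' s' b q *
              Γ s s' false b (((l : ℝ) - 1) / L) q
  f_def : ∀ t : ℕ, t < T → f t = Γ t (-1) false true 1 1
  χ_def : ∀ t : ℕ, t < T → χ t = ℓ' t (f t)
  bwd_init : ∀ t : ℕ, t < T → ∀ r : ℤ, -1 ≤ r → r ≤ (t : ℤ) → ∀ b : Bool,
    ∀ q : ℝ, 0 < q → q ≤ 1 →
      Γ t r true b 1 q = if r = -1 ∧ b = true then χ t else 0
  bwd_step : ∀ t : ℕ, t < T → ∀ l : ℕ, 1 ≤ l → l ≤ L → ∀ r : ℤ, -1 ≤ r → r ≤ (t : ℤ) →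
    ∀ b : Bool, ∀ p q : ℝ, ((l : ℝ) - 2) / L < p → p ≤ ((l : ℝ) - 1) / L → 0 ≤ p →
      0 < q → q ≤ 1 →
      Γ t r true b p q =
        Γ t r true b ((l : ℝ) / L) q
          + (if (t : ℤ) = r ∧ b = true ∧ (l : ℤ) = ⌈(L : ℝ) * q⌉ then 1 else 0)
          + (1 / (L : ℝ)) * ∑ s ∈ Finset.range t,
              Γ s r false b (((l : ℝ) - 1) / L) q *
                (Γ t (s : ℤ) true false ((l : ℝ) / L) ((l : ℝ) / L)
                  - C (t : ℤ) (s : ℤ) true ((l : ℝ) / L))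
  bwd_C : ∀ t : ℕ, t < T → ∀ s : ℕ, s ≤ t → ∀ l : ℕ, 1 ≤ l → l ≤ L →
    ∀ p : ℝ, ((l : ℝ) - 1) / L < p → p ≤ (l : ℝ) / L →
      C (t : ℤ) (s : ℤ) true p =
        ∑ t' ∈ Finset.Icc (-1 : ℤ) (t : ℤ), ∑ s' ∈ Finset.Icc (-1 : ℤ) (s : ℤ), ∑ b : Bool,
          ∫ q in Ioc (0 : ℝ) 1,
            Γ t t' true b ((l : ℝ) / L) q * C t' s' b q * Γ s s' true b ((l : ℝ) / L) q

/-!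
The bounds come from induction on the time `t`. In a forward sweep the diagonal coefficient
`Γ_{t,t,0,0}(i/L, ·)` is the indicator of the layers already passed, so the covariance entering
layer `i` involves the unknown covariances of time `t` only through an average over earlier layers,
apart from terms controlled by the coefficients `Γ_{t,r}` with `r < t`. The step of these
coefficients is `1/L` times such quantities, which gives a discrete Volterra inequality whose
Gronwall bound does not depend on `L`; the diagonal covariance `C_{t,t}` is then bounded in the same
way. Reversing the layers and flipping the Boolean indices turns a backward sweep into a forward one
with start value `χ t`, which is bounded because `f t` is and `ℓ'` is continuous.

Once everything is bounded, a coefficient with `r < t` moves by `O(1/L)` per layer. The coefficient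
with `r = t` also jumps by `1`, but only for `q` in a single cell of length `1/L`, so the
covariances, which are averages over `q`, move by `O(1/L)` as well.
-/

section SequencesAndSums

lemma dist_le_mul_of_forall_dist_succ_le {α : Type*} [PseudoMetricSpace α] {u : ℕ → α} {n : ℕ}
    {δ : ℝ} (h : ∀ i < n, dist (u i) (u (i + 1)) ≤ δ) {i j : ℕ} (hi : i ≤ n) (hj : j ≤ n) :
    dist (u i) (u j) ≤ δ * |(i : ℝ) - j| := by
  wlog hij : i ≤ j generalizing i j
  · rw [dist_comm, abs_sub_comm]
    exact this hj hi (le_of_not_ge hij)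
  calc dist (u i) (u j) ≤ ∑ _k ∈ Finset.Ico i j, δ :=
        dist_le_Ico_sum_of_dist_le hij fun _ hk => h _ (hk.trans_le hj)
    _ = δ * |(i : ℝ) - j| := by
        rw [abs_sub_comm, abs_of_nonneg (sub_nonneg.mpr (Nat.cast_le.mpr hij)), Finset.sum_const,
          Nat.card_Ico, nsmul_eq_mul, Nat.cast_sub hij, mul_comm]

lemma abs_sub_le_mul_abs_div_sub_div {u : ℕ → ℝ} {n L : ℕ} {A : ℝ}
    (h : ∀ i < n, |u (i + 1) - u i| ≤ A / L) {i j : ℕ} (hi : i ≤ n) (hj : j ≤ n) :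
    |u i - u j| ≤ A * |(i : ℝ) / L - (j : ℝ) / L| := by
  calc |u i - u j| ≤ A / L * |(i : ℝ) - j| :=
        dist_le_mul_of_forall_dist_succ_le (u := u)
          (fun k hk => by rw [dist_comm]; exact h k hk) hi hj
    _ = A * |(i : ℝ) / L - (j : ℝ) / L| := by
        rw [← sub_div, abs_div, Nat.abs_cast]; ring

lemma le_mul_exp_of_succ_le {u : ℕ → ℝ} {L : ℕ} {κ N : ℝ} (hκ : 0 ≤ κ) (hN : 0 ≤ N)
    (h0 : u 0 ≤ N) (hstep : ∀ i < L, u (i + 1) ≤ (1 + κ / L) * u i) {i : ℕ} (hi : i ≤ L) :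
    u i ≤ N * Real.exp κ := by
  have hpow : (1 + κ / L) ^ i ≤ Real.exp κ := by
    calc (1 + κ / L) ^ i ≤ Real.exp (κ / L) ^ i := by
          gcongr; rw [add_comm]; exact Real.add_one_le_exp _
      _ = Real.exp (κ * (i / L)) := by rw [← Real.exp_nat_mul]; ring_nf
      _ ≤ Real.exp κ := by
          gcongr
          exact mul_le_of_le_one_right hκ (div_le_one_of_le₀ (Nat.cast_le.mpr hi) L.cast_nonneg)
  calc u i ≤ (1 + κ / L) ^ i * u 0 :=
        le_geom (by positivity) i fun k hk => hstep k (hk.trans_le hi)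
    _ ≤ (1 + κ / L) ^ i * N := by gcongr
    _ ≤ Real.exp κ * N := by gcongr
    _ = N * Real.exp κ := mul_comm _ _

/-- The mean `L⁻¹ ∑_{m < n} g m` over the first `n` of `L` cells, a Riemann sum for
`∫₀^{n/L}`. -/
noncomputable def cellMean (L n : ℕ) (g : ℕ → ℝ) : ℝ :=
  1 / (L : ℝ) * ∑ m ∈ Finset.range n, g m

lemma cellMean_mono {L n : ℕ} {g h : ℕ → ℝ} (hgh : ∀ m < n, g m ≤ h m) :
    cellMean L n g ≤ cellMean L n h :=
  mul_le_mul_of_nonneg_left (Finset.sum_le_sum fun m hm => hgh m (Finset.mem_range.mp hm))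
    (by positivity)

lemma abs_cellMean_le (L n : ℕ) (g : ℕ → ℝ) : |cellMean L n g| ≤ cellMean L n fun m => |g m| := by
  rw [cellMean, abs_mul, abs_of_nonneg (by positivity : (0 : ℝ) ≤ 1 / L)]
  exact mul_le_mul_of_nonneg_left (Finset.abs_sum_le_sum_abs _ _) (by positivity)

lemma cellMean_nonneg {L n : ℕ} {g : ℕ → ℝ} (hg : ∀ m < n, 0 ≤ g m) : 0 ≤ cellMean L n g :=
  mul_nonneg (by positivity) (Finset.sum_nonneg fun m hm => hg m (Finset.mem_range.mp hm))

lemma cellMean_succ (L n : ℕ) (g : ℕ → ℝ) :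
    cellMean L (n + 1) g = cellMean L n g + g n / L := by
  rw [cellMean, cellMean, Finset.sum_range_succ]; ring

lemma cellMean_add (L n : ℕ) (g h : ℕ → ℝ) :
    cellMean L n (fun m => g m + h m) = cellMean L n g + cellMean L n h := by
  simp only [cellMean, Finset.sum_add_distrib, mul_add]

lemma cellMean_sub (L n : ℕ) (g h : ℕ → ℝ) :
    cellMean L n (fun m => g m - h m) = cellMean L n g - cellMean L n h := by
  simp only [cellMean, Finset.sum_sub_distrib, mul_sub]

lemma cellMean_const_mul (L n : ℕ) (a : ℝ) (g : ℕ → ℝ) :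
    cellMean L n (fun m => a * g m) = a * cellMean L n g := by
  simp only [cellMean, ← Finset.mul_sum]; ring

lemma cellMean_const_le {L n : ℕ} (hn : n ≤ L) {a : ℝ} (ha : 0 ≤ a) :
    cellMean L n (fun _ => a) ≤ a := by
  rw [cellMean, Finset.sum_const, Finset.card_range, nsmul_eq_mul, ← mul_assoc, one_div_mul_eq_div]
  exact mul_le_of_le_one_left ha (div_le_one_of_le₀ (Nat.cast_le.mpr hn) L.cast_nonneg)

lemma cellMean_eq_of_eq_zero {L i : ℕ} (hi : i ≤ L) {g : ℕ → ℝ} (hg : ∀ m < L, i ≤ m → g m = 0) :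
    cellMean L L g = cellMean L i g := by
  rw [cellMean, cellMean, ← Finset.sum_subset (Finset.range_mono hi) fun m hm hmi =>
    hg m (Finset.mem_range.mp hm) (not_lt.mp fun h => hmi (Finset.mem_range.mpr h))]

lemma cellMean_indicator {L i : ℕ} (hi : i < L) :
    cellMean L L (fun m => if i = m then 1 else 0) = 1 / L := by
  rw [cellMean, Finset.sum_ite_eq, if_pos (Finset.mem_range.mpr hi), mul_one]

lemma cellMean_reflect (L : ℕ) (g : ℕ → ℝ) :
    cellMean L L (fun m => g (L - 1 - m)) = cellMean L L g := by
  rw [cellMean, cellMean, Finset.sum_range_reflect]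

-- The single quantity `u i + cellMean L i v` controls both unknowns and grows geometrically.
lemma coupled_discrete_gronwall {u v : ℕ → ℝ} {L : ℕ} {K N : ℝ} (hK : 0 ≤ K) (hN : 0 ≤ N)
    (hv : ∀ i < L, 0 ≤ v i) (h0 : u 0 ≤ N)
    (hustep : ∀ i < L, u (i + 1) ≤ u i + K / L * (u i + v i))
    (hvle : ∀ i < L, v i ≤ K * (u i + cellMean L i v)) :
    (∀ i ≤ L, u i ≤ N * Real.exp (K * (K + 2))) ∧
      ∀ i < L, v i ≤ K * (N * Real.exp (K * (K + 2))) := by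
  have hmean : ∀ i ≤ L, 0 ≤ cellMean L i v := fun i hi =>
    cellMean_nonneg fun m hm => hv m (hm.trans_le hi)
  have hsum : ∀ i ≤ L, u i + cellMean L i v ≤ N * Real.exp (K * (K + 2)) := fun i hi => by
    refine le_mul_exp_of_succ_le (u := fun i => u i + cellMean L i v) (by positivity) hN
      (by simpa [cellMean] using h0) (fun i hi => ?_) hi
    have hu : u i ≤ u i + cellMean L i v := le_add_of_nonneg_right (hmean i hi.le)
    calc u (i + 1) + cellMean L (i + 1) v
        ≤ u i + K / L * (u i + v i) + (cellMean L i v + v i / L) := by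
          rw [cellMean_succ]; gcongr; exact hustep i hi
      _ ≤ u i + K / L * (u i + cellMean L i v + K * (u i + cellMean L i v))
            + (cellMean L i v + K * (u i + cellMean L i v) / L) := by
          gcongr <;> exact hvle i hi
      _ = (1 + K * (K + 2) / L) * (u i + cellMean L i v) := by ring
  refine ⟨fun i hi => (le_add_of_nonneg_right (hmean i hi)).trans (hsum i hi), fun i hi => ?_⟩
  exact (hvle i hi).trans (mul_le_mul_of_nonneg_left (hsum i hi.le) hK)

lemma abs_mul_mul_sub_mul_mul_le {a a' b b' c K δ : ℝ} (hc : |c| ≤ K) (ha : |a| ≤ K)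
    (hb' : |b'| ≤ K) (haa' : |a' - a| ≤ δ) (hbb' : |b' - b| ≤ δ) :
    |a' * c * b' - a * c * b| ≤ 2 * K ^ 2 * δ := by
  have hK : 0 ≤ K := (abs_nonneg c).trans hc
  have hδ : 0 ≤ δ := (abs_nonneg _).trans haa'
  calc |a' * c * b' - a * c * b| = |(a' - a) * c * b' + a * c * (b' - b)| := by ring_nf
    _ ≤ |a' - a| * |c| * |b'| + |a| * |c| * |b' - b| := by
        simpa only [abs_mul] using abs_add_le ((a' - a) * c * b') (a * c * (b' - b))
    _ ≤ δ * K * K + K * K * δ := by gcongr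
    _ = 2 * K ^ 2 * δ := by ring

lemma abs_sum_range_mul_le {n : ℕ} {f g : ℕ → ℝ} {A B : ℝ} (hf : ∀ s < n, |f s| ≤ A)
    (hg : ∀ s < n, |g s| ≤ B) : |∑ s ∈ Finset.range n, f s * g s| ≤ n * (A * B) := by
  calc |∑ s ∈ Finset.range n, f s * g s| ≤ ∑ _s ∈ Finset.range n, A * B := by
        refine (Finset.abs_sum_le_sum_abs _ _).trans (Finset.sum_le_sum fun s hs => ?_)
        have hs' := Finset.mem_range.mp hs
        rw [abs_mul]
        exact mul_le_mul (hf s hs') (hg s hs') (abs_nonneg _) ((abs_nonneg _).trans (hf s hs'))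
    _ = n * (A * B) := by rw [Finset.sum_const, Finset.card_range, nsmul_eq_mul]

/-- An upper bound for the number of terms in the sum defining the covariance `C_{t,s}`, `s ≤ t`. -/
noncomputable def covTermBound (t : ℕ) : ℝ := 2 * ((t : ℝ) + 2) ^ 2

lemma covTermBound_mono {t T : ℕ} (h : t ≤ T) : covTermBound t ≤ covTermBound T := by
  unfold covTermBound; gcongr

lemma le_covTermBound (t : ℕ) : (t : ℝ) ≤ covTermBound t := by
  unfold covTermBound; nlinarith [t.cast_nonneg (α := ℝ)]

lemma covTermBound_pos (t : ℕ) : 0 < covTermBound t := by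
  unfold covTermBound; positivity

lemma abs_sum_cov_le {t s : ℕ} (hst : s ≤ t) {g : ℤ → ℤ → Bool → ℝ} {B : ℝ} (hB : 0 ≤ B)
    (hg : ∀ t' s' : ℤ, -1 ≤ t' → t' ≤ t → -1 ≤ s' → s' ≤ s → ∀ b, |g t' s' b| ≤ B) :
    |∑ t' ∈ Finset.Icc (-1 : ℤ) t, ∑ s' ∈ Finset.Icc (-1 : ℤ) s, ∑ b : Bool, g t' s' b|
      ≤ covTermBound t * B := by
  have hcard : ∀ n : ℕ, ((Finset.Icc (-1 : ℤ) n).card : ℝ) = n + 2 := fun n => by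
    have : ((n : ℤ) + 1 - -1).toNat = n + 2 := by omega
    rw [Int.card_Icc, this]; norm_num
  calc _ ≤ ∑ _t' ∈ Finset.Icc (-1 : ℤ) t, ∑ _s' ∈ Finset.Icc (-1 : ℤ) s, ∑ _b : Bool, B := by
        refine (Finset.abs_sum_le_sum_abs _ _).trans (Finset.sum_le_sum fun t' ht' => ?_)
        refine (Finset.abs_sum_le_sum_abs _ _).trans (Finset.sum_le_sum fun s' hs' => ?_)
        rw [Finset.mem_Icc] at ht' hs'
        refine (Finset.abs_sum_le_sum_abs _ _).trans (Finset.sum_le_sum fun b _ => ?_)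
        exact hg t' s' ht'.1 ht'.2 hs'.1 hs'.2 b
    _ = 2 * ((t : ℝ) + 2) * ((s : ℝ) + 2) * B := by
        simp only [Finset.sum_const, nsmul_eq_mul, hcard, Finset.card_univ, Fintype.card_bool,
          Nat.cast_ofNat]
        ring
    _ ≤ covTermBound t * B := by
        have : (s : ℝ) ≤ t := Nat.cast_le.mpr hst
        rw [covTermBound, sq, ← mul_assoc]; gcongr

end SequencesAndSums

section LayerCells

/-- The `m`-th cell `(m/L, (m+1)/L]` of the partition of `(0, 1]` into `L` layers. -/
def layerCell (L m : ℕ) : Set ℝ := Set.Ioc ((m : ℝ) / L) (((m : ℝ) + 1) / L)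

/-- The right endpoint `(m+1)/L` of `layerCell L m`. -/
noncomputable def layerNode (L m : ℕ) : ℝ := ((m : ℝ) + 1) / L

variable {L m : ℕ}

lemma layerNode_mem_layerCell (hL : 0 < L) (m : ℕ) : layerNode L m ∈ layerCell L m := by
  have hL' : (0 : ℝ) < L := Nat.cast_pos.mpr hL
  exact ⟨(div_lt_div_iff_of_pos_right hL').mpr (lt_add_one _), le_rfl⟩

lemma layerCell_subset_Ioc (hm : m < L) : layerCell L m ⊆ Set.Ioc 0 1 := by
  have hL : (0 : ℝ) < L := Nat.cast_pos.mpr (by omega)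
  refine Set.Ioc_subset_Ioc (by positivity) ?_
  rw [div_le_one hL]
  exact_mod_cast hm

lemma layerNode_mem_Ioc (hm : m < L) : layerNode L m ∈ Set.Ioc 0 1 :=
  layerCell_subset_Ioc hm (layerNode_mem_layerCell (by omega) m)

lemma ceil_mul_of_mem_layerCell (hL : 0 < L) {q : ℝ} (hq : q ∈ layerCell L m) :
    ⌈(L : ℝ) * q⌉ = (m : ℤ) + 1 := by
  have hL' : (0 : ℝ) < L := Nat.cast_pos.mpr hL
  have hlt := (div_lt_iff₀' hL').mp hq.1
  have hle := (le_div_iff₀' hL').mp hq.2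
  rw [Int.ceil_eq_iff]
  push_cast
  exact ⟨by linarith, hle⟩

lemma exists_mem_layerCell (hL : 0 < L) {q : ℝ} (hq : q ∈ Set.Ioc (0 : ℝ) 1) :
    ∃ m < L, q ∈ layerCell L m := by
  have hL' : (0 : ℝ) < L := Nat.cast_pos.mpr hL
  obtain ⟨m, hm⟩ : ∃ m, ⌈(L : ℝ) * q⌉₊ = m + 1 :=
    Nat.exists_eq_add_one.mpr (Nat.ceil_pos.mpr (mul_pos hL' hq.1))
  obtain ⟨hlt, hle⟩ := (Nat.ceil_eq_iff m.succ_ne_zero).mp hm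
  refine ⟨m, ?_, ?_, ?_⟩
  · have : ⌈(L : ℝ) * q⌉₊ ≤ L := Nat.ceil_le.mpr (mul_le_of_le_one_right hL'.le hq.2)
    omega
  · simpa [div_lt_iff₀' hL'] using hlt
  · simpa [le_div_iff₀' hL'] using hle

lemma layerNode_pred_self (hL : 0 < L) : layerNode L (L - 1) = 1 := by
  have hL' : (L : ℝ) ≠ 0 := Nat.cast_ne_zero.mpr hL.ne'
  rw [layerNode, Nat.cast_pred hL, sub_add_cancel, div_self hL']

lemma setIntegral_Ioc_eq_cellMean (hL : 0 < L) {g : ℝ → ℝ}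
    (hg : ∀ m < L, ∀ q ∈ layerCell L m, g q = g (layerNode L m)) :
    ∫ q in Set.Ioc (0 : ℝ) 1, g q = cellMean L L fun m => g (layerNode L m) := by
  have hL' : (L : ℝ) ≠ 0 := Nat.cast_ne_zero.mpr hL.ne'
  have hconst : ∀ m < L, Set.EqOn (fun _ => g (layerNode L m)) g
      (Set.uIoc ((m : ℝ) / L) (((m + 1 : ℕ) : ℝ) / L)) := fun m hm q hq => by
    rw [Set.uIoc_of_le (by gcongr; exact m.le_succ), Nat.cast_succ] at hq
    exact (hg m hm q hq).symm
  have hsum := intervalIntegral.sum_integral_adjacent_intervals (μ := volume) (f := g)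
    (a := fun m : ℕ => (m : ℝ) / L) (n := L)
    fun m hm => intervalIntegrable_const.congr (hconst m hm)
  simp only [Nat.cast_zero, zero_div, div_self hL'] at hsum
  rw [← intervalIntegral.integral_of_le zero_le_one, ← hsum, cellMean, Finset.mul_sum]
  refine Finset.sum_congr rfl fun m hm => ?_
  rw [← intervalIntegral.integral_congr_ae
    (.of_forall fun q hq => hconst m (Finset.mem_range.mp hm) hq),
    intervalIntegral.integral_const, smul_eq_mul, Nat.cast_succ]
  ring

end LayerCells

section Sweeps

/-- Coefficients `G t r a b i m` standing for `Γ_{t,r,a,b}(i/L, q)` with `q` in the `m`-th cell. -/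
abbrev GridCoeff := ℕ → ℤ → Bool → Bool → ℕ → ℕ → ℝ

/-- Covariances `c t s a m` standing for `C_{t,s,a}(p)` with `p` in the `m`-th cell. -/
abbrev GridCov := ℤ → ℤ → Bool → ℕ → ℝ

/-- The reversal exchanging forward and backward sweeps: layers are run through in the
opposite order and both Boolean indices are flipped. -/
def reflectCoeff (L : ℕ) (G : GridCoeff) : GridCoeff :=
  fun t r a b i m => G t r (!a) (!b) (L - i) (L - 1 - m)

/-- The action on covariances of the reversal `reflectCoeff`. -/
def reflectCov (L : ℕ) (c : GridCov) : GridCov :=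
  fun t s b m => c t s (!b) (L - 1 - m)

/-- The grid form of one sweep direction: the recursion for the coefficients `G t r false`, in
increasing layer order from the start values `x t`, with `G t r true` as given data. The backward
sweep has this form after `reflectCoeff` and `reflectCov`. -/
structure IsSweep (T L : ℕ) (x : ℕ → ℝ) (G : GridCoeff) (c : GridCov) : Prop where
  cov_symm : ∀ t s b m, c t s b m = c s t b m
  cov_neg_one : ∀ t : ℤ, 0 ≤ t → ∀ b m, c t (-1) b m = 0
  coeff_eq_zero : ∀ (t : ℕ) (r : ℤ), (t : ℤ) < r → ∀ a b i m, G t r a b i m = 0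
  coeff_zero : ∀ t < T, ∀ r : ℤ, -1 ≤ r → r ≤ t → ∀ b, ∀ m < L,
    G t r false b 0 m = if r = -1 ∧ b = false then x t else 0
  coeff_succ : ∀ t < T, ∀ r : ℤ, -1 ≤ r → r ≤ t → ∀ b, ∀ i < L, ∀ m < L,
    G t r false b (i + 1) m = G t r false b i m
      + (if (t : ℤ) = r ∧ b = false ∧ i = m then 1 else 0)
      + 1 / (L : ℝ) * ∑ s ∈ Finset.range t,
          G s r true b (i + 1) m * (G t s false true i i - c t s false i)
  cov_eq : ∀ t < T, ∀ s ≤ t, ∀ i < L, c t s false i =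
    ∑ t' ∈ Finset.Icc (-1 : ℤ) t, ∑ s' ∈ Finset.Icc (-1 : ℤ) s, ∑ b : Bool,
      cellMean L L fun m => G t t' false b i m * c t' s' b m * G s s' false b i m

/-- All coefficients and covariances with time indices below `n` are at most `K` in size. -/
structure IsBoundedBefore (L n : ℕ) (K : ℝ) (G : GridCoeff) (c : GridCov) : Prop where
  coeff : ∀ t < n, ∀ r : ℤ, -1 ≤ r → ∀ a b, ∀ i ≤ L, ∀ m < L, |G t r a b i m| ≤ K
  cov : ∀ t s : ℤ, -1 ≤ t → -1 ≤ s → t < n → s < n → ∀ b, ∀ m < L, |c t s b m| ≤ K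

/-- The coefficients and covariances computed by the sweep at time `t` are at most `K` in size. -/
structure IsSweepBounded (L t : ℕ) (K : ℝ) (G : GridCoeff) (c : GridCov) : Prop where
  coeff : ∀ r : ℤ, -1 ≤ r → ∀ b, ∀ i ≤ L, ∀ m < L, |G t r false b i m| ≤ K
  cov : ∀ s : ℤ, -1 ≤ s → s ≤ t → ∀ m < L, |c t s false m| ≤ K

variable {T L n t : ℕ} {x : ℕ → ℝ} {K : ℝ} {G : GridCoeff} {c : GridCov}

lemma reflectCoeff_reflectCoeff (G : GridCoeff) {i m : ℕ} (hi : i ≤ L) (hm : m < L) (t : ℕ)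
    (r : ℤ) (a b : Bool) :
    reflectCoeff L G t r (!a) (!b) (L - i) (L - 1 - m) = G t r a b i m := by
  have hm' : L - 1 - (L - 1 - m) = m := by omega
  simp only [reflectCoeff, Bool.not_not, Nat.sub_sub_self hi, hm']

lemma reflectCov_reflectCov (c : GridCov) {m : ℕ} (hm : m < L) (t s : ℤ) (b : Bool) :
    reflectCov L c t s (!b) (L - 1 - m) = c t s b m := by
  have hm' : L - 1 - (L - 1 - m) = m := by omega
  simp only [reflectCov, Bool.not_not, hm']

namespace IsBoundedBefore

lemma mono {K' : ℝ} (h : IsBoundedBefore L n K G c) (hK : K ≤ K') :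
    IsBoundedBefore L n K' G c where
  coeff t ht r hr a b i hi m hm := (h.coeff t ht r hr a b i hi m hm).trans hK
  cov t s h1 h2 h3 h4 b m hm := (h.cov t s h1 h2 h3 h4 b m hm).trans hK

lemma of_le {n' : ℕ} (h : IsBoundedBefore L n' K G c) (hn : n ≤ n') :
    IsBoundedBefore L n K G c where
  coeff t ht := h.coeff t (ht.trans_le hn)
  cov t s h1 h2 h3 h4 := h.cov t s h1 h2 (by omega) (by omega)

lemma reflect (h : IsBoundedBefore L n K G c) :
    IsBoundedBefore L n K (reflectCoeff L G) (reflectCov L c) where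
  coeff t ht r hr _ _ i _ m _ := h.coeff t ht r hr _ _ (L - i) (by omega) (L - 1 - m) (by omega)
  cov t s h1 h2 h3 h4 _ m _ := h.cov t s h1 h2 h3 h4 _ (L - 1 - m) (by omega)

lemma succ (h : IsBoundedBefore L t K G c) (hsymm : ∀ t s b m, c t s b m = c s t b m)
    (hfwd : IsSweepBounded L t K G c)
    (hbwd : IsSweepBounded L t K (reflectCoeff L G) (reflectCov L c)) :
    IsBoundedBefore L (t + 1) K G c := by
  have hcov : ∀ s : ℤ, -1 ≤ s → s ≤ t → ∀ b, ∀ m < L, |c t s b m| ≤ K := fun s hs hst b m hm => by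
    cases b with
    | false => exact hfwd.cov s hs hst m hm
    | true =>
      rw [← reflectCov_reflectCov c hm]
      exact hbwd.cov s hs hst (L - 1 - m) (by omega)
  refine ⟨fun s hs r hr a b i hi m hm => ?_, fun t' s' ht' hs' htt' hst' b m hm => ?_⟩
  · rcases Nat.lt_succ_iff_lt_or_eq.mp hs with hlt | rfl
    · exact h.coeff s hlt r hr a b i hi m hm
    cases a with
    | false => exact hfwd.coeff r hr b i hi m hm
    | true =>
      rw [← reflectCoeff_reflectCoeff G hi hm]
      exact hbwd.coeff r hr (!b) (L - i) (by omega) (L - 1 - m) (by omega)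
  · rcases (by omega : t' = t ∨ s' = t ∨ (t' < t ∧ s' < t)) with rfl | rfl | ⟨htt, hst⟩
    · exact hcov s' hs' (by omega) b m hm
    · rw [hsymm]
      exact hcov t' ht' (by omega) b m hm
    · exact h.cov t' s' ht' hs' htt hst b m hm

end IsBoundedBefore

lemma IsSweepBounded.mono {K' : ℝ} (h : IsSweepBounded L t K G c) (hK : K ≤ K') :
    IsSweepBounded L t K' G c where
  coeff r hr b i hi m hm := (h.coeff r hr b i hi m hm).trans hK
  cov s hs hst m hm := (h.cov s hs hst m hm).trans hK

/-- The largest `|G t r false b i m|` over `-1 ≤ r < t`, both `b`, and all cells `m`. -/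
noncomputable def offDiagSup (G : GridCoeff) (L t i : ℕ) : ℝ :=
  ⨆ p : Finset.Ico (-1 : ℤ) t × Bool × Fin L, |G t p.1 false p.2.1 i p.2.2|

/-- The largest `|c t s false i|` over `0 ≤ s < t`. -/
noncomputable def crossCovSup (c : GridCov) (t i : ℕ) : ℝ :=
  ⨆ s : Fin t, |c t (s : ℕ) false i|

/-- The bound which `coupled_discrete_gronwall` gives for the coefficients `G t r`, `r < t`, in
terms of a bound `K` for all earlier times. -/
noncomputable def offDiagBound (t : ℕ) (K : ℝ) : ℝ :=
  K * Real.exp (covTermBound t * K ^ 2 * (covTermBound t * K ^ 2 + 2))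

/-- The bound which `coupled_discrete_gronwall` gives for the covariance `c t t`, in terms of a
bound `K` for all other quantities at times up to `t`. -/
noncomputable def diagCovBound (t : ℕ) (K : ℝ) : ℝ :=
  2 * covTermBound t * K ^ 3 * Real.exp (2 * covTermBound t * K ^ 3
    * (2 * covTermBound t * K ^ 3 + 2))

/-- The Lipschitz constant of the coefficients, given a bound `K` for all quantities before `T`. -/
def coeffLip (T : ℕ) (K : ℝ) : ℝ := T * (K * (2 * K))

/-- The Lipschitz constant of the covariances, given a bound `K` for all quantities before `T`. -/
noncomputable def covLip (T : ℕ) (K : ℝ) : ℝ :=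
  covTermBound T * (2 * K ^ 2 * (coeffLip T K + 1))

lemma offDiagSup_nonneg (G : GridCoeff) (L t i : ℕ) : 0 ≤ offDiagSup G L t i :=
  Real.iSup_nonneg fun _ => abs_nonneg _

lemma crossCovSup_nonneg (c : GridCov) (t i : ℕ) : 0 ≤ crossCovSup c t i :=
  Real.iSup_nonneg fun _ => abs_nonneg _

lemma abs_coeff_le_offDiagSup (G : GridCoeff) {L t : ℕ} (i : ℕ) {r : ℤ} (hr : -1 ≤ r)
    (hrt : r < t) (b : Bool) {m : ℕ} (hm : m < L) :
    |G t r false b i m| ≤ offDiagSup G L t i :=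
  le_ciSup (f := fun p : Finset.Ico (-1 : ℤ) t × Bool × Fin L => |G t p.1 false p.2.1 i p.2.2|)
    (Set.finite_range _).bddAbove (⟨r, Finset.mem_Ico.mpr ⟨hr, hrt⟩⟩, b, ⟨m, hm⟩)

lemma abs_cov_le_crossCovSup (c : GridCov) {t s : ℕ} (hs : s < t) (i : ℕ) :
    |c t s false i| ≤ crossCovSup c t i :=
  le_ciSup (f := fun s : Fin t => |c t (s : ℕ) false i|) (Set.finite_range _).bddAbove ⟨s, hs⟩

lemma offDiagSup_le {B : ℝ} (hB : 0 ≤ B) {i : ℕ}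
    (h : ∀ r : ℤ, -1 ≤ r → r < t → ∀ b, ∀ m < L, |G t r false b i m| ≤ B) :
    offDiagSup G L t i ≤ B :=
  Real.iSup_le (fun ⟨⟨r, hr⟩, b, m⟩ =>
    h r (Finset.mem_Ico.mp hr).1 (Finset.mem_Ico.mp hr).2 b m m.isLt) hB

lemma crossCovSup_le {B : ℝ} (hB : 0 ≤ B) {i : ℕ} (h : ∀ s < t, |c t s false i| ≤ B) :
    crossCovSup c t i ≤ B :=
  Real.iSup_le (fun s => h s s.isLt) hB

namespace IsSweep

lemma coeff_diag (h : IsSweep T L x G c) (ht : t < T) (b : Bool) {i m : ℕ} (hi : i ≤ L)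
    (hm : m < L) : G t t false b i m = if b = false ∧ m < i then 1 else 0 := by
  induction i with
  | zero => rw [h.coeff_zero t ht t (by omega) le_rfl b m hm]; simp
  | succ i ih =>
    have hsum : ∑ s ∈ Finset.range t,
        G s t true b (i + 1) m * (G t s false true i i - c t s false i) = 0 :=
      Finset.sum_eq_zero fun s hs => by
        rw [h.coeff_eq_zero s t (Nat.cast_lt.mpr (Finset.mem_range.mp hs)), zero_mul]
    rw [h.coeff_succ t ht t (by omega) le_rfl b i hi m hm, ih (by omega), hsum]
    grind

lemma abs_coeff_diag_le_one (h : IsSweep T L x G c) (ht : t < T) (b : Bool) {i m : ℕ}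
    (hi : i ≤ L) (hm : m < L) : |G t t false b i m| ≤ 1 := by
  rw [h.coeff_diag ht b hi hm]; split_ifs <;> simp

lemma abs_coeff_succ_sub_sub_le (h : IsSweep T L x G c) (hb : IsBoundedBefore L t K G c)
    (ht : t < T) {D : ℝ} {i : ℕ} (hi : i < L)
    (hD : ∀ s < t, |G t s false true i i - c t s false i| ≤ D) {r : ℤ} (hr : -1 ≤ r) (hrt : r ≤ t)
    (b : Bool) {m : ℕ} (hm : m < L) :
    |G t r false b (i + 1) m - G t r false b i m
        - (if (t : ℤ) = r ∧ b = false ∧ i = m then 1 else 0)| ≤ t * (K * D) / L := by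
  rw [h.coeff_succ t ht r hr hrt b i hi m hm, add_assoc, add_sub_cancel_left, add_sub_cancel_left,
    abs_mul, abs_of_nonneg (by positivity : (0 : ℝ) ≤ 1 / L), one_div_mul_eq_div]
  gcongr
  exact abs_sum_range_mul_le (fun s hs => hb.coeff s hs r hr true b (i + 1) hi m hm) hD

lemma abs_coeff_succ_sub_le (h : IsSweep T L x G c) (hb : IsBoundedBefore L t K G c)
    (ht : t < T) {D : ℝ} {i : ℕ} (hi : i < L)
    (hD : ∀ s < t, |G t s false true i i - c t s false i| ≤ D) {r : ℤ} (hr : -1 ≤ r) (hrt : r < t)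
    (b : Bool) {m : ℕ} (hm : m < L) :
    |G t r false b (i + 1) m - G t r false b i m| ≤ t * (K * D) / L := by
  simpa [hrt.ne'] using h.abs_coeff_succ_sub_sub_le hb ht hi hD hr hrt.le b hm

-- Since `G t t` is the indicator of the cells `m < i` already passed, the terms `t' = t` only
-- involve covariances at earlier layers; this makes the bound a Volterra inequality in `i`.
lemma abs_cov_le (h : IsSweep T L x G c) (ht : t < T) {s i : ℕ} (hst : s ≤ t) (hi : i < L)
    {M B : ℝ} {E : ℕ → ℝ} (hM0 : 0 ≤ M) (hB0 : 0 ≤ B) (hE0 : ∀ m < i, 0 ≤ E m)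
    (hM : ∀ t' : ℤ, -1 ≤ t' → t' < t → ∀ b, ∀ m < L, |G t t' false b i m| ≤ M)
    (hB : ∀ t' s' : ℤ, -1 ≤ t' → t' < t → -1 ≤ s' → s' ≤ s → ∀ b, ∀ m < L,
      |c t' s' b m * G s s' false b i m| ≤ B)
    (hE : ∀ s' : ℤ, -1 ≤ s' → s' ≤ s → ∀ m < i, |c t s' false m * G s s' false false i m| ≤ E m) :
    |c t s false i| ≤ covTermBound t * (M * B + cellMean L i E) := by
  have hE0' : 0 ≤ cellMean L i E := cellMean_nonneg hE0
  rw [h.cov_eq t ht s hst i hi]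
  refine abs_sum_cov_le hst (by positivity) fun t' s' ht' htt' hs' hss' b => ?_
  simp only [mul_assoc]
  refine (abs_cellMean_le _ _ _).trans ?_
  rcases htt'.lt_or_eq with hlt | rfl
  · calc cellMean L L (fun m => |G t t' false b i m * (c t' s' b m * G s s' false b i m)|)
        ≤ cellMean L L fun _ => M * B := cellMean_mono fun m hm => by
          rw [abs_mul]
          exact mul_le_mul (hM t' ht' hlt b m hm) (hB t' s' ht' hlt hs' hss' b m hm)
            (abs_nonneg _) hM0
      _ ≤ M * B := cellMean_const_le le_rfl (by positivity)
      _ ≤ M * B + cellMean L i E := le_add_of_nonneg_right hE0'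
  · calc cellMean L L (fun m => |G t t false b i m * (c t s' b m * G s s' false b i m)|)
        = cellMean L i fun m => |G t t false b i m * (c t s' b m * G s s' false b i m)| :=
          cellMean_eq_of_eq_zero hi.le fun m hm him => by
            rw [h.coeff_diag ht b hi.le hm, if_neg (by omega), zero_mul, abs_zero]
      _ ≤ cellMean L i E := cellMean_mono fun m hm => by
          rw [h.coeff_diag ht b hi.le (hm.trans hi)]
          cases b with
          | false => simpa [hm] using hE s' hs' hss' m hm
          | true => simpa using hE0 m hm
      _ ≤ M * B + cellMean L i E := le_add_of_nonneg_left (by positivity)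

lemma abs_cov_le_of_lt (h : IsSweep T L x G c) {s : ℤ} (hs : -1 ≤ s) (hst : s < t)
    (i : ℕ) : |c t s false i| ≤ crossCovSup c t i := by
  rcases hs.eq_or_lt with rfl | hs
  · rw [h.cov_neg_one t (by omega), abs_zero]
    exact crossCovSup_nonneg c t i
  · lift s to ℕ using by omega
    exact abs_cov_le_crossCovSup c (by omega) i

lemma offDiagSup_zero_le (h : IsSweep T L x G c) (ht : t < T) (hK : |x t| ≤ K) :
    offDiagSup G L t 0 ≤ K := by
  have hK0 : 0 ≤ K := (abs_nonneg _).trans hK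
  refine offDiagSup_le hK0 fun r hr hrt b m hm => ?_
  rw [h.coeff_zero t ht r hr hrt.le b m hm]
  split_ifs
  exacts [hK, abs_zero.trans_le hK0]

lemma offDiagSup_succ_le (h : IsSweep T L x G c) (hb : IsBoundedBefore L t K G c) (ht : t < T)
    (hK : 0 ≤ K) {i : ℕ} (hi : i < L) :
    offDiagSup G L t (i + 1) ≤ offDiagSup G L t i
      + t * K / L * (offDiagSup G L t i + crossCovSup c t i) := by
  have hu := offDiagSup_nonneg G L t i
  have hv := crossCovSup_nonneg c t i
  have hD : ∀ s < t, |G t s false true i i - c t s false i|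
      ≤ offDiagSup G L t i + crossCovSup c t i := fun s hs =>
    (abs_sub _ _).trans (add_le_add
      (abs_coeff_le_offDiagSup G i (by omega) (Nat.cast_lt.mpr hs) true hi)
      (abs_cov_le_crossCovSup c hs i))
  refine offDiagSup_le (by positivity) fun r hr hrt b m hm => ?_
  calc |G t r false b (i + 1) m|
      ≤ |G t r false b i m| + |G t r false b (i + 1) m - G t r false b i m| := by
        simpa using abs_add_le (G t r false b i m) (G t r false b (i + 1) m - G t r false b i m)
    _ ≤ offDiagSup G L t i + t * (K * (offDiagSup G L t i + crossCovSup c t i)) / L :=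
        add_le_add (abs_coeff_le_offDiagSup G i hr hrt b hm)
          (h.abs_coeff_succ_sub_le hb ht hi hD hr hrt b hm)
    _ = _ := by ring

lemma crossCovSup_le_add_cellMean (h : IsSweep T L x G c) (hb : IsBoundedBefore L t K G c)
    (ht : t < T) (hK : 1 ≤ K) {i : ℕ} (hi : i < L) :
    crossCovSup c t i ≤ covTermBound t * K ^ 2
      * (offDiagSup G L t i + cellMean L i (crossCovSup c t)) := by
  have hu := offDiagSup_nonneg G L t i
  have hv := crossCovSup_nonneg c t
  have hA := (covTermBound_pos t).le
  have hmean : 0 ≤ cellMean L i (crossCovSup c t) := cellMean_nonneg fun m _ => hv m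
  refine crossCovSup_le (by positivity) fun s hs => ?_
  have hGs : ∀ s' : ℤ, -1 ≤ s' → ∀ b, ∀ m < L, |G s s' false b i m| ≤ K :=
    fun s' hs' b m hm => hb.coeff s hs s' hs' false b i hi.le m hm
  calc |c t s false i|
      ≤ covTermBound t * (offDiagSup G L t i * K ^ 2
          + cellMean L i fun m => K * crossCovSup c t m) := by
        refine h.abs_cov_le ht hs.le hi hu (by positivity) (fun m _ => by have := hv m; positivity)
          (fun t' ht' htt' b m hm => abs_coeff_le_offDiagSup G i ht' htt' b hm)
          (fun t' s' ht' htt' hs' hss' b m hm => ?_) fun s' hs' hss' m hm => ?_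
        · rw [abs_mul, sq]
          exact mul_le_mul (hb.cov t' s' ht' hs' htt' (by omega) b m hm) (hGs s' hs' b m hm)
            (abs_nonneg _) (by positivity)
        · rw [abs_mul, mul_comm]
          exact mul_le_mul (hGs s' hs' false m (hm.trans hi)) (h.abs_cov_le_of_lt hs' (by omega) m)
            (abs_nonneg _) (by positivity)
    _ ≤ covTermBound t * (offDiagSup G L t i * K ^ 2 + K ^ 2 * cellMean L i (crossCovSup c t)) := by
        rw [cellMean_const_mul]
        gcongr
        exact le_self_pow₀ hK two_ne_zero
    _ = _ := by ring

lemma offDiagSup_le_and_crossCovSup_le (h : IsSweep T L x G c) (hb : IsBoundedBefore L t K G c)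
    (ht : t < T) (hK : 1 ≤ K) (hx : |x t| ≤ K) :
    (∀ i ≤ L, offDiagSup G L t i ≤ offDiagBound t K) ∧
      ∀ i < L, crossCovSup c t i ≤ covTermBound t * K ^ 2 * offDiagBound t K := by
  have hA := (covTermBound_pos t).le
  have hK0 : 0 ≤ K := zero_le_one.trans hK
  refine coupled_discrete_gronwall (by positivity) hK0 (fun i _ => crossCovSup_nonneg c t i)
    (h.offDiagSup_zero_le ht hx) (fun i hi => ?_) fun i hi =>
      h.crossCovSup_le_add_cellMean hb ht hK hi
  have hu := offDiagSup_nonneg G L t i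
  have hv := crossCovSup_nonneg c t i
  refine (h.offDiagSup_succ_le hb ht hK0 hi).trans ?_
  gcongr
  exacts [le_covTermBound t, le_self_pow₀ hK two_ne_zero]

lemma abs_diagCov_le_cellMean (h : IsSweep T L x G c) (hb : IsBoundedBefore L t K G c) (ht : t < T)
    (hK : 1 ≤ K) {i : ℕ} (hi : i < L)
    (hG : ∀ r : ℤ, -1 ≤ r → r < t → ∀ b, ∀ m < L, |G t r false b i m| ≤ K)
    (hc : ∀ s : ℤ, -1 ≤ s → s < t → ∀ m < L, |c t s false m| ≤ K) :
    |c t t false i| ≤ 2 * covTermBound t * K ^ 3 * (1 + cellMean L i fun m => |c t t false m|) := by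
  have hK0 : 0 ≤ K := zero_le_one.trans hK
  have hA := covTermBound_pos t
  have hmean : 0 ≤ cellMean L i fun m => |c t t false m| := cellMean_nonneg fun m _ => abs_nonneg _
  have hGt := fun b m (hm : m < L) => h.abs_coeff_diag_le_one ht b hi.le hm
  calc |c t t false i|
      ≤ covTermBound t * (K * K ^ 2 + cellMean L i fun m => K ^ 2 + |c t t false m|) := by
        refine h.abs_cov_le ht le_rfl hi hK0 (by positivity) (fun m _ => by positivity) hG
          (fun t' s' ht' htt' hs' hss' b m hm => ?_) fun s' hs' hss' m hm => ?_
        · rw [abs_mul, sq]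
          rcases hss'.lt_or_eq with hlt | rfl
          · exact mul_le_mul (hb.cov t' s' ht' hs' htt' hlt b m hm) (hG s' hs' hlt b m hm)
              (abs_nonneg _) hK0
          cases b with
          | false =>
            rw [h.cov_symm]
            exact mul_le_mul (hc t' ht' htt' m hm) ((hGt false m hm).trans hK) (abs_nonneg _) hK0
          | true =>
            rw [h.coeff_diag ht true hi.le hm]
            simpa using mul_nonneg hK0 hK0
        · have hm' := hm.trans hi
          rw [abs_mul]
          rcases hss'.lt_or_eq with hlt | rfl
          · rw [sq]
            exact (mul_le_mul (hc s' hs' hlt m hm') (hG s' hs' hlt false m hm') (abs_nonneg _)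
              hK0).trans (le_add_of_nonneg_right (abs_nonneg _))
          · exact (mul_le_of_le_one_right (abs_nonneg _) (hGt false m hm')).trans
              (le_add_of_nonneg_left (by positivity))
    _ ≤ covTermBound t * (K * K ^ 2 + (K ^ 2 + cellMean L i fun m => |c t t false m|)) := by
        rw [cellMean_add]
        gcongr
        exact cellMean_const_le hi.le (by positivity)
    _ ≤ covTermBound t * (2 * K ^ 3 * (1 + cellMean L i fun m => |c t t false m|)) := by
        have hK2 : K ^ 2 ≤ K ^ 3 := pow_le_pow_right₀ hK (by norm_num)
        have hK3 : 1 ≤ K ^ 3 := one_le_pow₀ hK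
        gcongr
        nlinarith
    _ = _ := by ring

lemma abs_diagCov_le (h : IsSweep T L x G c) (hb : IsBoundedBefore L t K G c) (ht : t < T)
    (hK : 1 ≤ K)
    (hG : ∀ r : ℤ, -1 ≤ r → r < t → ∀ b, ∀ i ≤ L, ∀ m < L, |G t r false b i m| ≤ K)
    (hc : ∀ s : ℤ, -1 ≤ s → s < t → ∀ m < L, |c t s false m| ≤ K) {i : ℕ} (hi : i < L) :
    |c t t false i| ≤ diagCovBound t K := by
  have hA := covTermBound_pos t
  have hgron := (coupled_discrete_gronwall (u := fun _ => 1) (v := fun i => |c t t false i|)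
    (L := L) (K := 2 * covTermBound t * K ^ 3) (N := 1) (by positivity) zero_le_one
    (fun i _ => abs_nonneg _) le_rfl (fun i _ => le_add_of_nonneg_right (by positivity))
    fun i hi => h.abs_diagCov_le_cellMean hb ht hK hi
      (fun r hr hrt b => hG r hr hrt b i hi.le) hc).2
  simpa only [one_mul, diagCovBound] using hgron i hi

lemma exists_isSweepBounded (hK : 1 ≤ K) (t : ℕ) : ∃ K' ≥ K, ∀ (T L : ℕ) (x : ℕ → ℝ)
    (G : GridCoeff) (c : GridCov), IsSweep T L x G c → t < T → IsBoundedBefore L t K G c →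
      |x t| ≤ K → IsSweepBounded L t K' G c := by
  set K₁ := max K (max (offDiagBound t K) (covTermBound t * K ^ 2 * offDiagBound t K))
  have hKK₁ : K ≤ K₁ := le_max_left _ _
  have hK₁ : 1 ≤ K₁ := hK.trans hKK₁
  refine ⟨max K₁ (diagCovBound t K₁), hKK₁.trans (le_max_left _ _),
    fun T L x G c h ht hb hx => ?_⟩
  obtain ⟨hu, hv⟩ := h.offDiagSup_le_and_crossCovSup_le hb ht hK hx
  have hG : ∀ r : ℤ, -1 ≤ r → r < t → ∀ b, ∀ i ≤ L, ∀ m < L, |G t r false b i m| ≤ K₁ :=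
    fun r hr hrt b i hi m hm => (abs_coeff_le_offDiagSup G i hr hrt b hm).trans <|
      (hu i hi).trans ((le_max_left _ _).trans (le_max_right _ _))
  have hc : ∀ s : ℤ, -1 ≤ s → s < t → ∀ m < L, |c t s false m| ≤ K₁ :=
    fun s hs hst m hm => (h.abs_cov_le_of_lt hs hst m).trans <|
      (hv m hm).trans ((le_max_right _ _).trans (le_max_right _ _))
  refine ⟨fun r hr b i hi m hm => le_max_of_le_left ?_, fun s hs hst m hm => ?_⟩
  · rcases lt_trichotomy r t with hlt | rfl | hgt
    · exact hG r hr hlt b i hi m hm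
    · exact (h.abs_coeff_diag_le_one ht b hi hm).trans hK₁
    · rw [h.coeff_eq_zero t r hgt, abs_zero]
      exact zero_le_one.trans hK₁
  · rcases hst.lt_or_eq with hlt | rfl
    · exact le_max_of_le_left (hc s hs hlt m hm)
    · exact le_max_of_le_right (h.abs_diagCov_le (hb.mono hKK₁) ht hK₁ hG hc hm)

lemma abs_coeff_succ_sub_sub_le_coeffLip (h : IsSweep T L x G c) (hb : IsBoundedBefore L T K G c)
    (ht : t < T) {r : ℤ} (hr : -1 ≤ r) (hrt : r ≤ t) (b : Bool) {i m : ℕ} (hi : i < L)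
    (hm : m < L) :
    |G t r false b (i + 1) m - G t r false b i m
        - (if (t : ℤ) = r ∧ b = false ∧ i = m then 1 else 0)| ≤ coeffLip T K / L := by
  have hK : 0 ≤ K := (abs_nonneg _).trans (hb.coeff t ht r hr false b i hi.le m hm)
  refine (h.abs_coeff_succ_sub_sub_le (hb.of_le ht.le) ht hi (D := 2 * K) (fun s hs => ?_)
    hr hrt b hm).trans ?_
  · rw [two_mul]
    exact (abs_sub _ _).trans (add_le_add
      (hb.coeff t ht s (by omega) false true i hi.le i hi)
      (hb.cov t s (by omega) (by omega) (by omega) (by omega) false i hi))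
  · unfold coeffLip
    gcongr

lemma abs_coeff_sub_le (h : IsSweep T L x G c) (hb : IsBoundedBefore L T K G c) (ht : t < T)
    {r : ℤ} (hr : -1 ≤ r) (hrt : r < t) (b : Bool) {i j m : ℕ} (hi : i ≤ L) (hj : j ≤ L)
    (hm : m < L) :
    |G t r false b i m - G t r false b j m| ≤ coeffLip T K * |(i : ℝ) / L - (j : ℝ) / L| :=
  abs_sub_le_mul_abs_div_sub_div (u := fun i => G t r false b i m)
    (fun i hi => by
      simpa [hrt.ne'] using h.abs_coeff_succ_sub_sub_le_coeffLip hb ht hr hrt.le b hi hm) hi hj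

lemma abs_coeff_succ_sub_le_add_indicator (h : IsSweep T L x G c) (hb : IsBoundedBefore L T K G c)
    (ht : t < T) {r : ℤ} (hr : -1 ≤ r) (hrt : r ≤ t) (b : Bool) {i m : ℕ} (hi : i < L)
    (hm : m < L) :
    |G t r false b (i + 1) m - G t r false b i m|
      ≤ coeffLip T K / L + if i = m then 1 else 0 := by
  have hsub := h.abs_coeff_succ_sub_sub_le_coeffLip hb ht hr hrt b hi hm
  have hjump : |(if (t : ℤ) = r ∧ b = false ∧ i = m then (1 : ℝ) else 0)|
      ≤ if i = m then 1 else 0 := by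
    split_ifs <;> simp_all
  calc |G t r false b (i + 1) m - G t r false b i m|
      ≤ |G t r false b (i + 1) m - G t r false b i m
            - (if (t : ℤ) = r ∧ b = false ∧ i = m then 1 else 0)|
          + |(if (t : ℤ) = r ∧ b = false ∧ i = m then (1 : ℝ) else 0)| := by
        rw [← sub_le_iff_le_add]
        exact abs_sub_abs_le_abs_sub _ _
    _ ≤ coeffLip T K / L + if i = m then 1 else 0 := add_le_add hsub hjump

lemma abs_cov_succ_sub_le (h : IsSweep T L x G c) (hb : IsBoundedBefore L T K G c) (ht : t < T)
    {s : ℕ} (hst : s ≤ t) {i : ℕ} (hi : i + 1 < L) :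
    |c t s false (i + 1) - c t s false i| ≤ covLip T K / L := by
  have hiL : i < L := by omega
  have hK : 0 ≤ K := (abs_nonneg _).trans (hb.coeff t ht (-1) le_rfl false false 0 L.zero_le i hiL)
  have hlip : 0 ≤ coeffLip T K := by unfold coeffLip; positivity
  rw [h.cov_eq t ht s hst _ hi, h.cov_eq t ht s hst _ hiL]
  simp only [← Finset.sum_sub_distrib, ← cellMean_sub]
  refine (abs_sum_cov_le hst (B := 2 * K ^ 2 * (coeffLip T K + 1) / L) (by positivity)
    fun t' s' ht' htt' hs' hss' b => ?_).trans ?_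
  · refine (abs_cellMean_le _ _ _).trans ?_
    calc _ ≤ cellMean L L fun m => 2 * K ^ 2 * (coeffLip T K / L + if i = m then 1 else 0) :=
          cellMean_mono fun m hm => abs_mul_mul_sub_mul_mul_le
            (hb.cov t' s' ht' hs' (by omega) (by omega) b m hm)
            (hb.coeff t ht t' ht' false b i hiL.le m hm)
            (hb.coeff s (by omega) s' hs' false b (i + 1) hi.le m hm)
            (h.abs_coeff_succ_sub_le_add_indicator hb ht ht' htt' b hiL hm)
            (h.abs_coeff_succ_sub_le_add_indicator hb (by omega) hs' hss' b hiL hm)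
      _ ≤ 2 * K ^ 2 * (coeffLip T K / L + 1 / L) := by
          rw [cellMean_const_mul, cellMean_add, cellMean_indicator hiL]
          gcongr
          exact cellMean_const_le le_rfl (by positivity)
      _ = 2 * K ^ 2 * (coeffLip T K + 1) / L := by ring
  · rw [covLip, ← mul_div_assoc]
    gcongr
    exact covTermBound_mono ht.le

lemma abs_cov_sub_le (h : IsSweep T L x G c) (hb : IsBoundedBefore L T K G c) (ht : t < T)
    {s : ℕ} (hst : s ≤ t) {i j : ℕ} (hi : i < L) (hj : j < L) :
    |c t s false i - c t s false j| ≤ covLip T K * |(i : ℝ) / L - (j : ℝ) / L| :=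
  abs_sub_le_mul_abs_div_sub_div (n := L - 1) (u := fun i => c t s false i)
    (fun i hi => h.abs_cov_succ_sub_le hb ht hst (by omega)) (by omega) (by omega)

end IsSweep
end Sweeps

section LinearTP

/-- The values of the coefficients `Γ` at the grid points `i/L` and the nodes of the cells. -/
noncomputable def gridCoeff (L : ℕ) (Γ : ℕ → ℤ → Bool → Bool → ℝ → ℝ → ℝ) : GridCoeff :=
  fun t r a b i m => Γ t r a b ((i : ℝ) / L) (layerNode L m)

/-- The values of the covariances `C` at the nodes of the cells. -/
noncomputable def gridCov (L : ℕ) (C : ℤ → ℤ → Bool → ℝ → ℝ) : GridCov :=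
  fun t s a m => C t s a (layerNode L m)

namespace IsLinearTP

variable {T L t : ℕ} {ξ : ℕ → ℝ} {ℓ' : ℕ → ℝ → ℝ} {Γ : ℕ → ℤ → Bool → Bool → ℝ → ℝ → ℝ}
  {C : ℤ → ℤ → Bool → ℝ → ℝ} {f χ : ℕ → ℝ} {q q' : ℝ} {r : ℤ} {i m : ℕ}

lemma forward_step (h : IsLinearTP T L ξ ℓ' Γ C f χ) (ht : t < T) (hr : -1 ≤ r) (hrt : r ≤ t)
    (b : Bool) (hi : i < L) (hq : q ∈ Set.Ioc 0 1) :
    Γ t r false b (((i + 1 : ℕ) : ℝ) / L) q = Γ t r false b ((i : ℝ) / L) q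
      + (if (t : ℤ) = r ∧ b = false ∧ ((i + 1 : ℕ) : ℤ) = ⌈(L : ℝ) * q⌉ then 1 else 0)
      + 1 / (L : ℝ) * ∑ s ∈ Finset.range t, Γ s r true b (((i + 1 : ℕ) : ℝ) / L) q
          * (Γ t s false true ((i : ℝ) / L) (layerNode L i) - C t s false (layerNode L i)) := by
  have hL : (0 : ℝ) < L := Nat.cast_pos.mpr (Nat.zero_lt_of_lt hi)
  have hcast : (((i + 1 : ℕ) : ℝ) - 1) / L = (i : ℝ) / L := by
    rw [Nat.cast_succ, add_sub_cancel_right]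
  have hstep := h.fwd_step t ht (i + 1) i.succ_pos hi r hr hrt b (((i + 1 : ℕ) : ℝ) / L) q
  rw [hcast] at hstep
  simpa only [layerNode, Nat.cast_succ] using
    hstep (by gcongr; linarith) le_rfl hq.1 hq.2

lemma backward_step (h : IsLinearTP T L ξ ℓ' Γ C f χ) (ht : t < T) (hr : -1 ≤ r) (hrt : r ≤ t)
    (b : Bool) (hi : i < L) (hq : q ∈ Set.Ioc 0 1) :
    Γ t r true b ((i : ℝ) / L) q = Γ t r true b (((i + 1 : ℕ) : ℝ) / L) q
      + (if (t : ℤ) = r ∧ b = true ∧ ((i + 1 : ℕ) : ℤ) = ⌈(L : ℝ) * q⌉ then 1 else 0)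
      + 1 / (L : ℝ) * ∑ s ∈ Finset.range t, Γ s r false b ((i : ℝ) / L) q
          * (Γ t s true false (((i + 1 : ℕ) : ℝ) / L) (layerNode L i)
              - C t s true (layerNode L i)) := by
  have hL : (0 : ℝ) < L := Nat.cast_pos.mpr (Nat.zero_lt_of_lt hi)
  have hcast : (((i + 1 : ℕ) : ℝ) - 1) / L = (i : ℝ) / L := by
    rw [Nat.cast_succ, add_sub_cancel_right]
  have hstep := h.bwd_step t ht (i + 1) i.succ_pos hi r hr hrt b ((i : ℝ) / L) q
  rw [hcast] at hstep
  simpa only [layerNode, Nat.cast_succ] using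
    hstep (by gcongr; push_cast; linarith) le_rfl (by positivity) hq.1 hq.2

lemma forward_coeff_eq_of_ceil_eq (h : IsLinearTP T L ξ ℓ' Γ C f χ) (ht : t < T) (hr : -1 ≤ r)
    (hrt : r ≤ t) (b : Bool) (hq : q ∈ Set.Ioc 0 1) (hq' : q' ∈ Set.Ioc 0 1)
    (hqq' : ⌈(L : ℝ) * q⌉ = ⌈(L : ℝ) * q'⌉)
    (hlt : ∀ s < t, ∀ i ≤ L, Γ s r true b ((i : ℝ) / L) q = Γ s r true b ((i : ℝ) / L) q')
    (hi : i ≤ L) : Γ t r false b ((i : ℝ) / L) q = Γ t r false b ((i : ℝ) / L) q' := by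
  induction i with
  | zero =>
    rw [Nat.cast_zero, zero_div, h.fwd_init t ht r hr hrt b q hq.1 hq.2,
      h.fwd_init t ht r hr hrt b q' hq'.1 hq'.2]
  | succ i ih =>
    rw [h.forward_step ht hr hrt b hi hq, h.forward_step ht hr hrt b hi hq', ih (by omega), hqq']
    congr 2
    exact Finset.sum_congr rfl fun s hs => by rw [hlt s (Finset.mem_range.mp hs) (i + 1) hi]

lemma backward_coeff_eq_of_ceil_eq (h : IsLinearTP T L ξ ℓ' Γ C f χ) (ht : t < T) (hr : -1 ≤ r)
    (hrt : r ≤ t) (b : Bool) (hq : q ∈ Set.Ioc 0 1) (hq' : q' ∈ Set.Ioc 0 1)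
    (hqq' : ⌈(L : ℝ) * q⌉ = ⌈(L : ℝ) * q'⌉)
    (hlt : ∀ s < t, ∀ i ≤ L, Γ s r false b ((i : ℝ) / L) q = Γ s r false b ((i : ℝ) / L) q')
    (hL : 0 < L) (hi : i ≤ L) :
    Γ t r true b ((i : ℝ) / L) q = Γ t r true b ((i : ℝ) / L) q' := by
  induction hi using Nat.decreasingInduction with
  | self =>
    rw [div_self (Nat.cast_ne_zero.mpr hL.ne'), h.bwd_init t ht r hr hrt b q hq.1 hq.2,
      h.bwd_init t ht r hr hrt b q' hq'.1 hq'.2]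
  | of_succ i hi ih =>
    rw [h.backward_step ht hr hrt b hi hq, h.backward_step ht hr hrt b hi hq', ih, hqq']
    congr 2
    exact Finset.sum_congr rfl fun s hs => by rw [hlt s (Finset.mem_range.mp hs) i hi.le]

lemma coeff_eq_of_ceil_eq (h : IsLinearTP T L ξ ℓ' Γ C f χ) (hL : 0 < L) (ht : t < T)
    (hr : -1 ≤ r) (a b : Bool) (hq : q ∈ Set.Ioc 0 1) (hq' : q' ∈ Set.Ioc 0 1)
    (hqq' : ⌈(L : ℝ) * q⌉ = ⌈(L : ℝ) * q'⌉) (hi : i ≤ L) :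
    Γ t r a b ((i : ℝ) / L) q = Γ t r a b ((i : ℝ) / L) q' := by
  induction t using Nat.strong_induction_on generalizing a i with
  | _ t ih =>
    by_cases hrt : r ≤ t
    · cases a with
      | false =>
        exact h.forward_coeff_eq_of_ceil_eq ht hr hrt b hq hq' hqq'
          (fun s hs i hi => ih s hs (hs.trans ht) true hi) hi
      | true =>
        exact h.backward_coeff_eq_of_ceil_eq ht hr hrt b hq hq' hqq'
          (fun s hs i hi => ih s hs (hs.trans ht) false hi) hL hi
    · rw [h.Γ_vanish t r (not_le.mp hrt), h.Γ_vanish t r (not_le.mp hrt)]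

lemma coeff_eq_gridCoeff (h : IsLinearTP T L ξ ℓ' Γ C f χ) (ht : t < T) (hr : -1 ≤ r) (a b : Bool)
    (hm : m < L) (hq : q ∈ layerCell L m) (hi : i ≤ L) :
    Γ t r a b ((i : ℝ) / L) q = gridCoeff L Γ t r a b i m := by
  have hL : 0 < L := Nat.zero_lt_of_lt hm
  refine h.coeff_eq_of_ceil_eq hL ht hr a b (layerCell_subset_Ioc hm hq) (layerNode_mem_Ioc hm)
    ?_ hi
  rw [ceil_mul_of_mem_layerCell hL hq, ceil_mul_of_mem_layerCell hL (layerNode_mem_layerCell hL m)]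

lemma cov_eq_sum (h : IsLinearTP T L ξ ℓ' Γ C f χ) (ht : t < T) {s : ℕ} (hst : s ≤ t)
    (a : Bool) (hm : m < L) (hq : q ∈ layerCell L m) :
    C t s a q = ∑ t' ∈ Finset.Icc (-1 : ℤ) t, ∑ s' ∈ Finset.Icc (-1 : ℤ) s, ∑ b : Bool,
      ∫ p in Set.Ioc (0 : ℝ) 1, Γ t t' a b (((m + a.toNat : ℕ) : ℝ) / L) p * C t' s' b p
        * Γ s s' a b (((m + a.toNat : ℕ) : ℝ) / L) p := by
  have hcast : (((m + 1 : ℕ) : ℝ) - 1) / L = (m : ℝ) / L := by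
    rw [Nat.cast_succ, add_sub_cancel_right]
  have hlt : (((m + 1 : ℕ) : ℝ) - 1) / L < q := hcast.trans_lt hq.1
  have hle : q ≤ ((m + 1 : ℕ) : ℝ) / L := by simpa using hq.2
  cases a with
  | false =>
    simpa only [hcast, Bool.toNat_false, add_zero] using
      h.fwd_C t ht s hst (m + 1) m.succ_pos hm q hlt hle
  | true => exact h.bwd_C t ht s hst (m + 1) m.succ_pos hm q hlt hle

lemma cov_eq_gridCov (h : IsLinearTP T L ξ ℓ' Γ C f χ) {t s : ℤ} (ht : -1 ≤ t) (hs : -1 ≤ s)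
    (htT : t < T) (hsT : s < T) (b : Bool) (hm : m < L) (hq : q ∈ layerCell L m) :
    C t s b q = gridCov L C t s b m := by
  unfold gridCov
  wlog hst : s ≤ t generalizing t s
  · rw [h.C_symm t s, h.C_symm t s]
    exact this hs ht hsT htT (le_of_not_ge hst)
  rcases hs.lt_or_eq with hs | rfl
  · lift s to ℕ using by omega
    lift t to ℕ using by omega
    rw [h.cov_eq_sum (by omega) (by omega) b hm hq, h.cov_eq_sum (by omega) (by omega) b hm
      (layerNode_mem_layerCell (Nat.zero_lt_of_lt hm) m)]
  rcases ht.lt_or_eq with ht | rfl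
  · rw [h.C_mixed t (by omega), h.C_mixed t (by omega)]
  · rw [h.C_base, h.C_base]

lemma gridCov_eq_sum (h : IsLinearTP T L ξ ℓ' Γ C f χ) (ht : t < T) {s : ℕ} (hst : s ≤ t)
    (a : Bool) (hm : m < L) :
    gridCov L C t s a m = ∑ t' ∈ Finset.Icc (-1 : ℤ) t, ∑ s' ∈ Finset.Icc (-1 : ℤ) s, ∑ b : Bool,
      cellMean L L fun n => gridCoeff L Γ t t' a b (m + a.toNat) n * gridCov L C t' s' b n
        * gridCoeff L Γ s s' a b (m + a.toNat) n := by
  have hL : 0 < L := Nat.zero_lt_of_lt hm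
  have hi : m + a.toNat ≤ L := by have := a.toNat_le; omega
  rw [gridCov, h.cov_eq_sum ht hst a hm (layerNode_mem_layerCell hL m)]
  refine Finset.sum_congr rfl fun t' ht' => Finset.sum_congr rfl fun s' hs' =>
    Finset.sum_congr rfl fun b _ => setIntegral_Ioc_eq_cellMean hL fun n hn q hq => ?_
  rw [Finset.mem_Icc] at ht' hs'
  rw [h.coeff_eq_gridCoeff ht ht'.1 a b hn hq hi,
    h.coeff_eq_gridCoeff (by omega) hs'.1 a b hn hq hi,
    h.cov_eq_gridCov ht'.1 hs'.1 (by omega) (by omega) b hn hq]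
  rfl

lemma isSweep_forward (h : IsLinearTP T L ξ ℓ' Γ C f χ) :
    IsSweep T L ξ (gridCoeff L Γ) (gridCov L C) where
  cov_symm t s b m := h.C_symm t s b _
  cov_neg_one t ht b m := h.C_mixed t ht b _
  coeff_eq_zero t r hr a b i m := h.Γ_vanish t r hr a b _ _
  coeff_zero t ht r hr hrt b m hm := by
    have hq := layerNode_mem_Ioc hm
    rw [gridCoeff, Nat.cast_zero, zero_div, h.fwd_init t ht r hr hrt b _ hq.1 hq.2]
  coeff_succ t ht r hr hrt b i hi m hm := by
    have hcell : ((i + 1 : ℕ) : ℤ) = ⌈(L : ℝ) * layerNode L m⌉ ↔ i = m := by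
      rw [ceil_mul_of_mem_layerCell (by omega) (layerNode_mem_layerCell (by omega) m)]
      omega
    simpa only [hcell, gridCoeff, gridCov] using
      h.forward_step ht hr hrt b hi (layerNode_mem_Ioc hm)
  cov_eq t ht s hs i hi := h.gridCov_eq_sum ht hs false hi

lemma isSweep_backward (h : IsLinearTP T L ξ ℓ' Γ C f χ) :
    IsSweep T L χ (reflectCoeff L (gridCoeff L Γ)) (reflectCov L (gridCov L C)) where
  cov_symm t s b m := h.C_symm t s _ _
  cov_neg_one t ht b m := h.C_mixed t ht _ _
  coeff_eq_zero t r hr a b i m := h.Γ_vanish t r hr _ _ _ _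
  coeff_zero t ht r hr hrt b m hm := by
    have hq := layerNode_mem_Ioc (L := L) (m := L - 1 - m) (by omega)
    have hL : (L : ℝ) ≠ 0 := Nat.cast_ne_zero.mpr (by omega)
    rw [reflectCoeff, gridCoeff, Nat.sub_zero, div_self hL, Bool.not_false,
      h.bwd_init t ht r hr hrt (!b) _ hq.1 hq.2]
    simp only [Bool.not_eq_true']
  coeff_succ t ht r hr hrt b i hi m hm := by
    have hcell : ((L - 1 - i + 1 : ℕ) : ℤ) = ⌈(L : ℝ) * layerNode L (L - 1 - m)⌉ ↔ i = m := by
      rw [ceil_mul_of_mem_layerCell (by omega) (layerNode_mem_layerCell (by omega) (L - 1 - m))]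
      omega
    have hi₁ : L - (i + 1) = L - 1 - i := by omega
    have hi₀ : L - i = L - 1 - i + 1 := by omega
    have hstep := h.backward_step ht hr hrt (!b) (i := L - 1 - i) (by omega)
      (layerNode_mem_Ioc (L := L) (m := L - 1 - m) (by omega))
    simpa only [reflectCoeff, reflectCov, gridCoeff, gridCov, hi₁, hi₀, hcell, Bool.not_eq_true',
      Bool.not_false, Bool.not_true] using hstep
  cov_eq t ht s hs i hi := by
    have hi₀ : L - 1 - i + Bool.toNat true = L - i := by rw [Bool.toNat_true]; omega
    rw [reflectCov, Bool.not_false, h.gridCov_eq_sum ht hs true (by omega), hi₀]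
    refine Finset.sum_congr rfl fun t' _ => Finset.sum_congr rfl fun s' _ => ?_
    rw [← Equiv.sum_comp Equiv.boolNot]
    exact Finset.sum_congr rfl fun b _ => (cellMean_reflect L _).symm

lemma f_eq_gridCoeff (h : IsLinearTP T L ξ ℓ' Γ C f χ) (hL : 0 < L) (ht : t < T) :
    f t = gridCoeff L Γ t (-1) false true L (L - 1) := by
  rw [h.f_def t ht, gridCoeff, layerNode_pred_self hL, div_self (Nat.cast_ne_zero.mpr hL.ne')]

lemma isBoundedBefore_zero (h : IsLinearTP T L ξ ℓ' Γ C f χ) :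
    IsBoundedBefore L 0 1 (gridCoeff L Γ) (gridCov L C) where
  coeff t ht := absurd ht t.not_lt_zero
  cov t s ht hs ht0 hs0 b m _ := by
    obtain rfl : t = -1 := by omega
    obtain rfl : s = -1 := by omega
    rw [gridCov, h.C_base, abs_one]

end IsLinearTP

lemma exists_isBoundedBefore {T : ℕ} {ξ : ℕ → ℝ} {ℓ' : ℕ → ℝ → ℝ}
    (hcont : ∀ t < T, Continuous (ℓ' t)) {n : ℕ} (hn : n ≤ T) :
    ∃ K ≥ 1, ∀ L, 1 ≤ L → ∀ Γ C f χ, IsLinearTP T L ξ ℓ' Γ C f χ →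
      IsBoundedBefore L n K (gridCoeff L Γ) (gridCov L C) := by
  induction n with
  | zero => exact ⟨1, le_rfl, fun L _ Γ C f χ h => h.isBoundedBefore_zero⟩
  | succ n ih =>
    obtain ⟨K, hK, hbefore⟩ := ih (by omega)
    obtain ⟨Kfwd, hKfwd, hfwd⟩ :=
      IsSweep.exists_isSweepBounded (hK.trans (le_max_left K |ξ n|)) n
    obtain ⟨X, hX⟩ := isCompact_Icc.exists_bound_of_continuousOn
      (hcont n hn).continuousOn (s := Set.Icc (-Kfwd) Kfwd)
    have hKKfwd : K ≤ Kfwd := (le_max_left _ _).trans hKfwd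
    have hKfwdX : Kfwd ≤ max Kfwd X := le_max_left _ _
    obtain ⟨Kbwd, hKbwd, hbwd⟩ :=
      IsSweep.exists_isSweepBounded (hK.trans (hKKfwd.trans hKfwdX)) n
    refine ⟨Kbwd, hK.trans (hKKfwd.trans (hKfwdX.trans hKbwd)), fun L hL Γ C f χ h => ?_⟩
    have hb := hbefore L hL Γ C f χ h
    have hF := hfwd T L ξ _ _ h.isSweep_forward hn (hb.mono (le_max_left _ _)) (le_max_right _ _)
    have hχ : |χ n| ≤ max Kfwd X := by
      have hf : |f n| ≤ Kfwd := by
        rw [h.f_eq_gridCoeff hL hn]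
        exact hF.coeff (-1) le_rfl true L le_rfl (L - 1) (by omega)
      rw [h.χ_def n hn]
      exact (hX (f n) (abs_le.mp hf)).trans (le_max_right _ _)
    have hB := hbwd T L χ _ _ h.isSweep_backward hn (hb.mono (hKKfwd.trans hKfwdX)).reflect hχ
    exact (hb.mono (hKKfwd.trans (hKfwdX.trans hKbwd))).succ
      h.isSweep_forward.cov_symm (hF.mono (hKfwdX.trans hKbwd)) hB

lemma abs_natCast_sub_div_sub {n L i j : ℕ} (hi : i ≤ n) (hj : j ≤ n) :
    |((n - i : ℕ) : ℝ) / L - ((n - j : ℕ) : ℝ) / L| = |(i : ℝ) / L - (j : ℝ) / L| := by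
  rw [Nat.cast_sub hi, Nat.cast_sub hj, abs_sub_comm]
  ring_nf

namespace IsLinearTP

variable {T L t : ℕ} {ξ : ℕ → ℝ} {ℓ' : ℕ → ℝ → ℝ} {Γ : ℕ → ℤ → Bool → Bool → ℝ → ℝ → ℝ}
  {C : ℤ → ℤ → Bool → ℝ → ℝ} {f χ : ℕ → ℝ} {K : ℝ} {r : ℤ} {i j : ℕ}

lemma abs_gridCoeff_sub_le (h : IsLinearTP T L ξ ℓ' Γ C f χ)
    (hb : IsBoundedBefore L T K (gridCoeff L Γ) (gridCov L C)) (ht : t < T) (hr : -1 ≤ r)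
    (hrt : r < t) (a b : Bool) (hi : i ≤ L) (hj : j ≤ L) {m : ℕ} (hm : m < L) :
    |gridCoeff L Γ t r a b i m - gridCoeff L Γ t r a b j m|
      ≤ coeffLip T K * |(i : ℝ) / L - (j : ℝ) / L| := by
  cases a with
  | false => exact h.isSweep_forward.abs_coeff_sub_le hb ht hr hrt b hi hj hm
  | true =>
    rw [← reflectCoeff_reflectCoeff (gridCoeff L Γ) hi hm,
      ← reflectCoeff_reflectCoeff (gridCoeff L Γ) hj hm, ← abs_natCast_sub_div_sub hi hj]
    exact h.isSweep_backward.abs_coeff_sub_le hb.reflect ht hr hrt (!b) (L.sub_le i) (L.sub_le j)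
      (by omega)

lemma abs_gridCov_sub_le (h : IsLinearTP T L ξ ℓ' Γ C f χ)
    (hb : IsBoundedBefore L T K (gridCoeff L Γ) (gridCov L C)) (ht : t < T) {s : ℕ} (hst : s ≤ t)
    (a : Bool) (hi : i < L) (hj : j < L) :
    |gridCov L C t s a i - gridCov L C t s a j| ≤ covLip T K * |(i : ℝ) / L - (j : ℝ) / L| := by
  cases a with
  | false => exact h.isSweep_forward.abs_cov_sub_le hb ht hst hi hj
  | true =>
    rw [← reflectCov_reflectCov (gridCov L C) hi, ← reflectCov_reflectCov (gridCov L C) hj,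
      ← abs_natCast_sub_div_sub (Nat.le_sub_one_of_lt hi) (Nat.le_sub_one_of_lt hj)]
    exact h.isSweep_backward.abs_cov_sub_le hb.reflect ht hst (by omega) (by omega)

lemma abs_coeff_sub_le (h : IsLinearTP T L ξ ℓ' Γ C f χ) (hL : 0 < L)
    (hb : IsBoundedBefore L T K (gridCoeff L Γ) (gridCov L C)) (ht : t < T) (hr : -1 ≤ r)
    (hrt : r < t) (a b : Bool) {q : ℝ} (hq : q ∈ Set.Ioc 0 1) (hi : i ≤ L) (hj : j ≤ L) :
    |Γ t r a b ((i : ℝ) / L) q - Γ t r a b ((j : ℝ) / L) q|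
      ≤ coeffLip T K * |(i : ℝ) / L - (j : ℝ) / L| := by
  obtain ⟨m, hm, hqm⟩ := exists_mem_layerCell hL hq
  rw [h.coeff_eq_gridCoeff ht hr a b hm hqm hi, h.coeff_eq_gridCoeff ht hr a b hm hqm hj]
  exact h.abs_gridCoeff_sub_le hb ht hr hrt a b hi hj hm

lemma abs_cov_sub_le (h : IsLinearTP T L ξ ℓ' Γ C f χ) (hK : 0 ≤ covLip T K)
    (hb : IsBoundedBefore L T K (gridCoeff L Γ) (gridCov L C)) (ht : t < T) (hr : -1 ≤ r)
    (hrt : r ≤ t) (a : Bool) (hi0 : 1 ≤ i) (hi : i ≤ L) (hj0 : 1 ≤ j) (hj : j ≤ L) :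
    |C t r a ((i : ℝ) / L) - C t r a ((j : ℝ) / L)|
      ≤ covLip T K * |(i : ℝ) / L - (j : ℝ) / L| := by
  rcases hr.eq_or_lt with rfl | hr
  · rw [h.C_mixed t (by omega), h.C_mixed t (by omega), sub_self, abs_zero]
    exact mul_nonneg hK (abs_nonneg _)
  lift r to ℕ using by omega
  obtain ⟨i, rfl⟩ := Nat.exists_eq_add_of_le' hi0
  obtain ⟨j, rfl⟩ := Nat.exists_eq_add_of_le' hj0
  have hshift : ((i + 1 : ℕ) : ℝ) / L - ((j + 1 : ℕ) : ℝ) / L = (i : ℝ) / L - (j : ℝ) / L := by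
    push_cast; ring
  rw [hshift, Nat.cast_succ, Nat.cast_succ]
  exact h.abs_gridCov_sub_le hb ht (by omega) a hi hj

end IsLinearTP

end LinearTP

theorem stmt_12_general (T : ℕ) (ξ : ℕ → ℝ) (ℓ ℓ' : ℕ → ℝ → ℝ)
    (hderiv : ∀ t < T, ∀ x, HasDerivAt (ℓ t) (ℓ' t x) x)
    (hcont : ∀ t < T, Continuous (ℓ' t)) :
    ∃ c : ℝ, 0 < c ∧ ∀ L, 1 ≤ L → ∀ Γ C f χ, IsLinearTP T L ξ ℓ' Γ C f χ →
      ∀ t < T, ∀ r : ℤ, -1 ≤ r → ∀ a : Bool,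
        (r < t → ∀ b, ∀ q : ℝ, 0 < q → q ≤ 1 → ∀ i j : ℕ, i ≤ L → j ≤ L →
          |Γ t r a b ((i : ℝ) / L) q - Γ t r a b ((j : ℝ) / L) q|
            ≤ c * |(i : ℝ) / L - (j : ℝ) / L|) ∧
        (r ≤ t → ∀ i j : ℕ, 1 ≤ i → i ≤ L → 1 ≤ j → j ≤ L →
          |C t r a ((i : ℝ) / L) - C t r a ((j : ℝ) / L)| ≤ c * |(i : ℝ) / L - (j : ℝ) / L|) := by
  obtain ⟨K, hK, hbound⟩ := exists_isBoundedBefore (ξ := ξ) hcont le_rfl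
  have hcoeff : 0 ≤ coeffLip T K := by unfold coeffLip; positivity
  have hcov : 0 < covLip T K := by have := covTermBound_pos T; unfold covLip; positivity
  refine ⟨coeffLip T K + covLip T K, by positivity, fun L hL Γ C f χ h t ht r hr a =>
    ⟨fun hrt b q hq0 hq1 i j hi hj => ?_, fun hrt i j hi0 hi hj0 hj => ?_⟩⟩
  · refine (h.abs_coeff_sub_le hL (hbound L hL Γ C f χ h) ht hr hrt a b ⟨hq0, hq1⟩ hi hj).trans ?_
    gcongr
    exact le_add_of_nonneg_right hcov.le
  · refine (h.abs_cov_sub_le hcov.le (hbound L hL Γ C f χ h) ht hr hrt a hi0 hi hj0 hj).trans ?_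
    gcongr
    exact le_add_of_nonneg_left hcoeff

/-- Uniform Lipschitzness in the layer variable along the grid
`{0, 1/L, …, 1}`: `|Γ^L(p,q) − Γ^L(p',q)| ≤ c·|p − p'|` and
`|C^L(p) − C^L(p')| ≤ c·|p − p'|`, uniformly in `L = 2^k`, `k ≥ k₀`. -/
theorem stmt_12
    (T : ℕ) (hT : 1 ≤ T) (ξ : ℕ → ℝ) (ℓ : ℕ → ℝ → ℝ) (ℓ' : ℕ → ℝ → ℝ)
    (hderiv : ∀ (t : ℕ) (x : ℝ), HasDerivAt (ℓ t) (ℓ' t x) x)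
    (hlip : ∀ t : ℕ, LocallyLipschitz (ℓ' t))
    (Γ : ℕ → ℕ → ℤ → Bool → Bool → ℝ → ℝ → ℝ)
    (C : ℕ → ℤ → ℤ → Bool → ℝ → ℝ)
    (f χ : ℕ → ℕ → ℝ)
    (hTP : ∀ L : ℕ, 1 ≤ L → IsLinearTP T L ξ ℓ' (Γ L) (C L) (f L) (χ L)) :
    ∃ c : ℝ, 0 < c ∧ ∃ k₀ : ℕ, ∀ k : ℕ, k₀ ≤ k →
      ∀ t : ℕ, t < T → ∀ r : ℤ, -1 ≤ r → r < (t : ℤ) → ∀ a b : Bool,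
        ∀ q : ℝ, 0 < q → q ≤ 1 →
          ∀ i j : ℕ, i ≤ 2 ^ k → j ≤ 2 ^ k →
            |Γ (2 ^ k) t r a b ((i : ℝ) / (2 : ℝ) ^ k) q -
                Γ (2 ^ k) t r a b ((j : ℝ) / (2 : ℝ) ^ k) q| ≤
              c * |(i : ℝ) / (2 : ℝ) ^ k - (j : ℝ) / (2 : ℝ) ^ k| ∧
            (1 ≤ i → 1 ≤ j →
              |C (2 ^ k) (t : ℤ) r a ((i : ℝ) / (2 : ℝ) ^ k) -
                  C (2 ^ k) (t : ℤ) r a ((j : ℝ) / (2 : ℝ) ^ k)| ≤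
                c * |(i : ℝ) / (2 : ℝ) ^ k - (j : ℝ) / (2 : ℝ) ^ k|) := by
  obtain ⟨c, hc, hlipL⟩ := stmt_12_general T ξ ℓ ℓ' (fun t _ => hderiv t) fun t _ =>
    (hlip t).continuous
  refine ⟨c, hc, 0, fun k _ t ht r hr hrt a b q hq0 hq1 i j hi hj => ?_⟩
  have h2k : ((2 ^ k : ℕ) : ℝ) = (2 : ℝ) ^ k := Nat.cast_pow 2 k
  obtain ⟨hΓ, hC⟩ := hlipL (2 ^ k) Nat.one_le_two_pow _ _ _ _ (hTP _ Nat.one_le_two_pow) t ht r hr a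
  rw [h2k] at hΓ hC
  exact ⟨hΓ hrt b q hq0 hq1 i j hi hj, fun hi0 hj0 => hC hrt.le i j hi0 hi hj0 hj⟩
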